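/- Let G be a connected graph and K a field. The Krull dimension of the symbolic fiber cone Ā(G) of the cover ideal J(G) equals the graphical dimension of G: dim Ā(G) = gdim(G). -/

import Mathlib

open MvPolynomial

/-- A `k`-cover of a graph `G`. -/
def IsCover {n : ℕ} (G : SimpleGraph (Fin n)) (k : ℕ) (α : Fin n → ℕ) : Prop :=
  ∀ ⦃i j : Fin n⦄, G.Adj i j → k ≤ α i + α j

/-- A basic `k`-cover. -/
def IsBasicCover {n : ℕ} (G : SimpleGraph (Fin n)) (k : ℕ) (α : Fin n → ℕ) : Prop :=
  IsCover G k α ∧ ∀ β : Fin n → ℕ, β ≤ α → IsCover G k β → β = α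

/-- The polynomial ring `S[t] = K[x_1,…,x_n][t]`, realised as a polynomial ring in the
variables `some i ↦ x_i` and `none ↦ t`. -/
abbrev St (K : Type*) [Field K] (n : ℕ) := MvPolynomial (Option (Fin n)) K

/-- The element `x₁^{α 1} ⋯ x_n^{α n} · t^k` of `S[t]`. -/
noncomputable def coverMonomial (K : Type*) [Field K] {n : ℕ} (α : Fin n → ℕ) (k : ℕ) :
    St K n :=
  MvPolynomial.monomial (Finsupp.equivFunOnFinite.symm (fun o => o.elim k α)) 1

/-- The symbolic Rees algebra `A(G) = ⊕_k J(G)^{(k)} t^k = K[x^α t^k : α a k-cover]` of the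
cover ideal of `G`, as a subalgebra of `S[t]`. -/
noncomputable def symbolicRees (K : Type*) [Field K] {n : ℕ} (G : SimpleGraph (Fin n)) :
    Subalgebra K (St K n) :=
  Algebra.adjoin K {p | ∃ k : ℕ, ∃ α : Fin n → ℕ, IsCover G k α ∧ p = coverMonomial K α k}

/-- The ideal `m·A(G)` of `A(G)`, generated by the variables `x_i = x_i t^0`. -/
noncomputable def irrelevantIdeal (K : Type*) [Field K] {n : ℕ} (G : SimpleGraph (Fin n)) :
    Ideal (symbolicRees K G) :=
  Ideal.span {a : symbolicRees K G | ∃ i : Fin n, (a : St K n) = MvPolynomial.X (some i)}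

/-- The symbolic fiber cone `Ā(G) = A(G)/mA(G)` of the cover ideal of `G`. -/
noncomputable def symbolicFiberCone (K : Type*) [Field K] {n : ℕ}
    (G : SimpleGraph (Fin n)) : Type _ :=
  symbolicRees K G ⧸ irrelevantIdeal K G

noncomputable instance (K : Type*) [Field K] {n : ℕ} (G : SimpleGraph (Fin n)) :
    CommRing (symbolicFiberCone K G) :=
  Ideal.Quotient.commRing (irrelevantIdeal K G)

/-- A free parameter pair. -/
def IsFreeParameterPair {n r : ℕ} (G : SimpleGraph (Fin n)) (a b : Fin r → Fin n) : Prop :=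
  Function.Injective a ∧ Function.Injective b ∧
  (∀ i j : Fin r, ¬ G.Adj (a i) (a j)) ∧
  (∀ i j : Fin r, a i ≠ b j) ∧
  (∀ i : Fin r, G.Adj (a i) (b i)) ∧
  (∀ i j : Fin r, G.Adj (a i) (b j) → i ≤ j)

/-- `G` has a free parameter set of cardinality `r`. -/
def HasFreeParameterSet {n : ℕ} (G : SimpleGraph (Fin n)) (r : ℕ) : Prop :=
  ∃ a b : Fin r → Fin n, IsFreeParameterPair G a b

/-- The graphical dimension. -/
noncomputable def gdim {n : ℕ} (G : SimpleGraph (Fin n)) : ℕ :=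
  sSup {r : ℕ | HasFreeParameterSet G r} + 1

theorem ringKrullDim_eq_of_injective_of_isIntegral {R B : Type*} [CommRing R] [CommRing B]
    (f : R →+* B) (hinj : Function.Injective f) (hint : f.IsIntegral) :
    ringKrullDim B = ringKrullDim R := by
  algebraize [f]
  have : Algebra.IsIntegral R B := ⟨hint⟩
  have : FaithfulSMul R B := (faithfulSMul_iff_algebraMap_injective R B).mpr hinj
  refine le_antisymm ?_ ?_
  · refine Order.krullDim_le_of_strictMono (PrimeSpectrum.comap (algebraMap R B)) ?_
    intro p q hpq
    exact Ideal.IsIntegral.comap_lt_comap (R := R) (I := p.asIdeal) (J := q.asIdeal) hpq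
  · refine iSup_le fun l ↦ ?_
    obtain ⟨P, hP, hPl⟩ := (Ideal.nonempty_primesOver (S := B) l.head.asIdeal)
    obtain ⟨L, hL, -⟩ := Ideal.exists_ltSeries_of_hasGoingUp (S := B) l P
    rw [← hL]
    exact le_iSup (fun p : LTSeries (PrimeSpectrum B) ↦ (p.length : WithBot ℕ∞)) L

theorem LinearIndependent.card_le_card_of_subset_span {K M ι : Type*} [Field K] [AddCommGroup M]
    [Module K M] [Fintype ι] {v : ι → M} (hv : LinearIndependent K v) (s : Finset M)
    (hs : ∀ i, v i ∈ Submodule.span K (s : Set M)) : Fintype.card ι ≤ s.card := by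
  simpa using linearIndependent_le_span_aux' v hv (s : Set M) (by rintro _ ⟨i, rfl⟩; exact hs i)

theorem Nat.le_of_forall_pow_le_mul_pow {a b D : ℕ} (h : ∀ m, 1 ≤ m → m ^ a ≤ D * m ^ b) :
    a ≤ b := by
  by_contra! hab
  have h1 := h (D + 1) (by omega)
  have h2 : (D + 1) ^ (b + 1) ≤ (D + 1) ^ a := Nat.pow_le_pow_right (by omega) hab
  have h3 : 0 < (D + 1) ^ b := by positivity
  rw [pow_succ] at h2
  nlinarith

theorem le_of_injective_of_growth_le {K B : Type*} [Field K] [CommRing B] [Algebra K B] {d e C : ℕ}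
    (g : MvPolynomial (Fin d) K →ₐ[K] B) (hg : Function.Injective g)
    (F : ℕ → Submodule K B) (hmono : Monotone F) (hone : 1 ∈ F 0)
    (hmul : ∀ i j x y, x ∈ F i → y ∈ F j → x * y ∈ F (i + j))
    (hexh : ∀ x, ∃ m, x ∈ F m)
    (hgrowth : ∀ m, ∃ s : Finset B, s.card ≤ C * (m + 1) ^ e ∧ F m ≤ Submodule.span K (s : Set B)) :
    d ≤ e := by
  choose c hc using fun i ↦ hexh (g (X i))
  have hpow : ∀ (x : B) (k m : ℕ), x ∈ F k → x ^ m ∈ F (m * k) := by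
    intro x k m hx
    induction m with
    | zero => simpa using hone
    | succ m ih => rw [pow_succ, add_mul, one_mul]; exact hmul _ _ _ _ ih hx
  have hprod : ∀ (s : Finset (Fin d)) (f : Fin d → B) (k : Fin d → ℕ),
      (∀ i, f i ∈ F (k i)) → ∏ i ∈ s, f i ∈ F (∑ i ∈ s, k i) := by
    classical
    intro s f k hf
    induction s using Finset.induction_on with
    | empty => simpa using hone
    | insert i s hi ih =>
      rw [Finset.prod_insert hi, Finset.sum_insert hi]
      exact hmul _ _ _ _ (hf i) ih
  refine Nat.le_of_forall_pow_le_mul_pow (D := C * (∑ i, c i + 1) ^ e) fun m hm ↦ ?_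
  obtain ⟨s, hs, hFs⟩ := hgrowth (m * ∑ i, c i)
  let u : (Fin d → Fin m) → (Fin d →₀ ℕ) := fun a ↦ Finsupp.equivFunOnFinite.symm fun i ↦ (a i : ℕ)
  have hu : Function.Injective u := by
    intro a a' h
    have h' := Finsupp.equivFunOnFinite.symm.injective h
    funext i
    exact Fin.ext (congrFun h' i)
  have hli : LinearIndependent K (fun a ↦ g (monomial (u a) 1)) := by
    have h1 := (basisMonomials (Fin d) K).linearIndependent.comp u hu
    have h2 := h1.map' g.toLinearMap (LinearMap.ker_eq_bot.mpr hg)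
    simpa [Function.comp_def] using h2
  have hcard := hli.card_le_card_of_subset_span s (by
    intro a
    refine hFs ?_
    have : g (monomial (u a) 1) = ∏ i, g (X i) ^ (a i : ℕ) := by
      rw [monomial_eq, Finsupp.prod_fintype _ _ (by simp)]
      simp [u]
    rw [this]
    refine hmono ?_ (hprod _ _ _ fun i ↦ hpow _ _ _ (hc i))
    rw [Finset.mul_sum]
    exact Finset.sum_le_sum fun i _ ↦ Nat.mul_le_mul_right _ (a i).2.le)
  simp only [Fintype.card_pi, Fintype.card_fin, Finset.prod_const, Finset.card_univ] at hcard
  refine hcard.trans (hs.trans ?_)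
  rw [mul_assoc, ← mul_pow]
  gcongr
  nlinarith

theorem le_of_finite_of_growth_ge {K B : Type*} [Field K] [CommRing B] [Algebra K B] {d e c : ℕ}
    (g : MvPolynomial (Fin d) K →ₐ[K] B) (hg : g.Finite)
    (V : Submodule K B) (hV : V.FG)
    (hgrowth : ∀ m : ℕ, 1 ≤ m → ∃ v : (Fin e → Fin m) → B, LinearIndependent K v ∧
      ∀ a, v a ∈ V ^ (c * m)) :
    e ≤ d := by
  classical
  obtain ⟨Z, rfl⟩ := hV
  let : Algebra (MvPolynomial (Fin d) K) B := g.toRingHom.toAlgebra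
  have : Module.Finite (MvPolynomial (Fin d) K) B := hg
  have hsmul : ∀ (p : MvPolynomial (Fin d) K) (x : B), p • x = g p * x := fun _ _ ↦ rfl
  obtain ⟨s, w, hw⟩ := Module.Finite.exists_fin (R := MvPolynomial (Fin d) K) (M := B)
  have hrep : ∀ x : B, ∃ p : Fin s → MvPolynomial (Fin d) K, ∑ l, g (p l) * w l = x := by
    intro x
    have hx : x ∈ Submodule.span (MvPolynomial (Fin d) K) (Set.range w) := by rw [hw]; trivial
    obtain ⟨p, hp⟩ := (Submodule.mem_span_range_iff_exists_fun _).mp hx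
    exact ⟨p, by simpa only [hsmul] using hp⟩
  choose P hP using hrep
  let W : ℕ → Submodule K B := fun N ↦
    { carrier := {x | ∃ p : Fin s → MvPolynomial (Fin d) K,
        (∀ l, (p l).totalDegree ≤ N) ∧ ∑ l, g (p l) * w l = x}
      zero_mem' := ⟨0, by simp, by simp⟩
      add_mem' := by
        rintro _ _ ⟨p, hp, rfl⟩ ⟨q, hq, rfl⟩
        refine ⟨p + q, fun l ↦ (totalDegree_add _ _).trans (max_le (hp l) (hq l)), ?_⟩
        simp [add_mul, Finset.sum_add_distrib]
      smul_mem' := by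
        rintro a _ ⟨p, hp, rfl⟩
        refine ⟨a • p, fun l ↦ (totalDegree_smul_le _ _).trans (hp l), ?_⟩
        simp [Finset.smul_sum] }
  let D₁ : ℕ := ∑ z ∈ Z, ∑ l, ∑ l', (P (z * w l) l').totalDegree
  let D₀ : ℕ := ∑ l', (P 1 l').totalDegree
  have hD₁ : ∀ z ∈ Z, ∀ l l', (P (z * w l) l').totalDegree ≤ D₁ := by
    intro z hz l l'
    refine le_trans ?_ (Finset.single_le_sum
      (f := fun z ↦ ∑ l, ∑ l', (P (z * w l) l').totalDegree) (fun _ _ ↦ Nat.zero_le _) hz)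
    refine le_trans ?_ (Finset.single_le_sum
      (f := fun l ↦ ∑ l', (P (z * w l) l').totalDegree) (fun _ _ ↦ Nat.zero_le _)
      (Finset.mem_univ l))
    exact Finset.single_le_sum (f := fun l' ↦ (P (z * w l) l').totalDegree)
      (fun _ _ ↦ Nat.zero_le _) (Finset.mem_univ l')
  have hstep : ∀ N, ∀ z ∈ Z, ∀ x ∈ W N, z * x ∈ W (N + D₁) := by
    rintro N z hz _ ⟨p, hp, rfl⟩
    refine ⟨fun l' ↦ ∑ l, p l * P (z * w l) l', fun l' ↦ ?_, ?_⟩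
    · refine totalDegree_finsetSum_le fun l _ ↦ (totalDegree_mul _ _).trans ?_
      exact Nat.add_le_add (hp l) (hD₁ z hz l l')
    · simp only [map_sum, map_mul, Finset.sum_mul, Finset.mul_sum]
      rw [Finset.sum_comm]
      refine Finset.sum_congr rfl fun l _ ↦ ?_
      simp only [mul_assoc]
      rw [← Finset.mul_sum, hP]
      ring
  have hpow : ∀ k, Submodule.span K (Z : Set B) ^ k ≤ W (D₀ + k * D₁) := by
    intro k
    induction k with
    | zero =>
      rw [pow_zero, Submodule.one_le]
      exact ⟨P 1, fun l ↦ by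
        simpa using Finset.single_le_sum (f := fun l' ↦ (P 1 l').totalDegree)
          (fun _ _ ↦ Nat.zero_le _) (Finset.mem_univ l), hP 1⟩
    | succ k ih =>
      rw [pow_succ', Submodule.mul_le]
      intro z hz x hx
      have hx := ih hx
      rw [add_mul, one_mul, ← add_assoc]
      induction hz using Submodule.span_induction with
      | mem z hz => exact hstep _ z hz x hx
      | zero => rw [zero_mul]; exact zero_mem _
      | add y z _ _ hy hz => rw [add_mul]; exact add_mem hy hz
      | smul a y _ hy => rw [smul_mul_assoc]; exact Submodule.smul_mem _ _ hy
  have hspan : ∀ N, ∃ T : Finset B, T.card ≤ s * (N + 1) ^ d ∧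
      W N ≤ Submodule.span K (T : Set B) := by
    intro N
    let f : Fin s × (Fin d → Fin (N + 1)) → B := fun a ↦
      g (monomial (Finsupp.equivFunOnFinite.symm fun i ↦ (a.2 i : ℕ)) 1) * w a.1
    refine ⟨Finset.univ.image f, Finset.card_image_le.trans (by simp), ?_⟩
    rintro _ ⟨p, hp, rfl⟩
    refine Submodule.sum_mem _ fun l _ ↦ ?_
    rw [(p l).as_sum, map_sum, Finset.sum_mul]
    refine Submodule.sum_mem _ fun u hu ↦ ?_
    have : g (monomial u (coeff u (p l))) * w l = coeff u (p l) • f (l, fun i ↦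
        ⟨u i, Nat.lt_succ_of_le (((monomial_le_degreeOf i hu).trans
          (degreeOf_le_totalDegree _ _)).trans (hp l))⟩) := by
      rw [← smul_mul_assoc, ← map_smul, smul_monomial, smul_eq_mul, mul_one]
      congr 4
      exact (Finsupp.equivFunOnFinite_symm_coe u).symm
    rw [this]
    exact Submodule.smul_mem _ _ (Submodule.subset_span (by simp))
  refine Nat.le_of_forall_pow_le_mul_pow (D := s * (D₀ + c * D₁ + 1) ^ d) fun m hm ↦ ?_
  obtain ⟨v, hv, hvV⟩ := hgrowth m hm
  obtain ⟨T, hT, hWT⟩ := hspan (D₀ + c * m * D₁)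
  have hcard := hv.card_le_card_of_subset_span T fun a ↦ hWT (hpow _ (hvV a))
  simp only [Fintype.card_pi, Fintype.card_fin, Finset.prod_const, Finset.card_univ] at hcard
  refine hcard.trans (hT.trans ?_)
  rw [mul_assoc s, ← mul_pow]
  gcongr
  nlinarith

theorem IsCover.add {n k l : ℕ} {G : SimpleGraph (Fin n)} {α β : Fin n → ℕ}
    (hα : IsCover G k α) (hβ : IsCover G l β) : IsCover G (k + l) (α + β) := by
  intro i j h
  have h1 := hα h
  have h2 := hβ h
  simp only [Pi.add_apply]
  omega

theorem IsCover.mono {n k : ℕ} {G : SimpleGraph (Fin n)} {α β : Fin n → ℕ}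
    (hα : IsCover G k α) (h : α ≤ β) : IsCover G k β := fun i j hij ↦
  (hα hij).trans (Nat.add_le_add (h i) (h j))

theorem IsCover.exists_sub_single {n k : ℕ} {G : SimpleGraph (Fin n)} {α : Fin n → ℕ}
    (hα : IsCover G k α) (hb : ¬ IsBasicCover G k α) :
    ∃ i, ∃ β, IsCover G k β ∧ α = β + Pi.single i 1 := by
  simp only [IsBasicCover, hα, true_and, not_forall] at hb
  obtain ⟨β, hle, hβ, hne⟩ := hb
  obtain ⟨i, hi⟩ : ∃ i, β i < α i := by
    by_contra! h
    exact hne (le_antisymm hle h)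
  have hsingle : Pi.single i 1 ≤ α := by
    intro j
    by_cases hj : j = i
    · subst hj; simp; omega
    · simp [hj]
  refine ⟨i, α - Pi.single i 1, hβ.mono ?_, (tsub_add_cancel_of_le hsingle).symm⟩
  intro j
  by_cases hj : j = i
  · subst hj; simp; omega
  · simpa [hj] using hle j

theorem IsCover.exists_isBasicCover_le {n k : ℕ} {G : SimpleGraph (Fin n)} {α : Fin n → ℕ}
    (hα : IsCover G k α) : ∃ β ≤ α, IsBasicCover G k β := by
  induction h : ∑ i, α i using Nat.strong_induction_on generalizing α with
  | _ N ih =>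
    by_cases hb : IsBasicCover G k α
    · exact ⟨α, le_rfl, hb⟩
    · obtain ⟨i, β, hβ, rfl⟩ := hα.exists_sub_single hb
      obtain ⟨γ, hγ, hγb⟩ := ih (∑ i, β i) (by simp [← h, Finset.sum_add_distrib]) hβ rfl
      exact ⟨γ, hγ.trans (le_add_of_nonneg_right (by simp)), hγb⟩

theorem IsBasicCover.not_isCover_of_add_single {n k : ℕ} {G : SimpleGraph (Fin n)}
    {α β : Fin n → ℕ} (hα : IsBasicCover G k α) (i : Fin n) (h : α = β + Pi.single i 1) :
    ¬ IsCover G k β := by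
  intro hβ
  have := congrFun (hα.2 β (by rw [h]; exact le_add_of_nonneg_right (by simp)) hβ) i
  rw [h] at this
  simp at this

theorem IsBasicCover.exists_adj_add_eq_of_pos {n k : ℕ} {G : SimpleGraph (Fin n)}
    {α : Fin n → ℕ} (hα : IsBasicCover G k α) {i : Fin n} (hi : 0 < α i) :
    ∃ j, G.Adj i j ∧ α i + α j = k := by
  by_contra! h
  have hsingle : Pi.single i 1 ≤ α := by
    intro j
    by_cases hj : j = i
    · subst hj; simpa
    · simp [hj]
  refine hα.not_isCover_of_add_single i (tsub_add_cancel_of_le hsingle).symm ?_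
  intro x y hxy
  have h1 := hα.1 hxy
  by_cases hx : x = i
  · subst hx
    have hy : y ≠ x := hxy.ne'
    have := h y hxy
    simp [hy]
    omega
  · by_cases hy : y = i
    · subst hy
      have := h x hxy.symm
      simp [hx]
      omega
    · simpa [hx, hy] using h1

/-- Without isolated vertices, every vertex lies on an edge where a basic cover is tight. -/
theorem IsBasicCover.exists_adj_add_eq {n k : ℕ} {G : SimpleGraph (Fin n)}
    (hiso : ∀ v : Fin n, ∃ w, G.Adj v w)
    {α : Fin n → ℕ} (hα : IsBasicCover G k α) (i : Fin n) :
    ∃ j, G.Adj i j ∧ α i + α j = k := by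
  rcases Nat.eq_zero_or_pos (α i) with hi | hi
  · obtain ⟨j, hij⟩ := hiso i
    have h1 := hα.1 hij
    refine ⟨j, hij, ?_⟩
    rcases Nat.eq_zero_or_pos (α j) with hj | hj
    · omega
    · obtain ⟨l, -, hl⟩ := hα.exists_adj_add_eq_of_pos hj
      omega
  · exact hα.exists_adj_add_eq_of_pos hi

/-- Every `k`-cover with `k ≥ 2` splits off a `2`-cover. -/
theorem IsCover.exists_add {n k : ℕ} {G : SimpleGraph (Fin n)} {α : Fin n → ℕ}
    (hα : IsCover G (k + 2) α) :
    ∃ β γ, IsCover G k β ∧ IsCover G 2 γ ∧ α = β + γ := by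
  let γ : Fin n → ℕ := fun i ↦ if α i = 0 then 0 else if k + 2 ≤ α i then 2 else 1
  have hγ : γ ≤ α := by
    intro i
    simp only [γ]
    split_ifs <;> omega
  refine ⟨α - γ, γ, ?_, ?_, (tsub_add_cancel_of_le hγ).symm⟩
  · intro i j hij
    have := hα hij
    simp only [Pi.sub_apply, γ]
    split_ifs <;> omega
  · intro i j hij
    have := hα hij
    simp only [γ]
    split_ifs <;> omega

/-- The values below `k / 2` of a basic `k`-cover give rise to a free parameter set. -/
theorem IsBasicCover.hasFreeParameterSet {n k : ℕ} {G : SimpleGraph (Fin n)}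
    (hiso : ∀ v : Fin n, ∃ w, G.Adj v w) {α : Fin n → ℕ} (hα : IsBasicCover G k α) :
    HasFreeParameterSet G ((Finset.univ.filter fun i ↦ 2 * α i < k).image α).card := by
  set W := (Finset.univ.filter fun i ↦ 2 * α i < k).image α
  let f : Fin W.card → ℕ := fun p ↦ W.orderEmbOfFin rfl p.rev
  have hf : StrictAnti f := fun p q hpq ↦
    (W.orderEmbOfFin rfl).strictMono (Fin.rev_lt_rev.mpr hpq)
  have hmem : ∀ p, ∃ i, 2 * α i < k ∧ α i = f p := by
    intro p
    obtain ⟨i, hi, hip⟩ := Finset.mem_image.mp (W.orderEmbOfFin_mem rfl p.rev)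
    exact ⟨i, (Finset.mem_filter.mp hi).2, hip⟩
  choose a ha haf using hmem
  choose b hab hb using fun p ↦ hα.exists_adj_add_eq hiso (a p)
  refine ⟨a, b, ?_, ?_, ?_, ?_, hab, ?_⟩
  · intro p q h
    exact hf.injective (by rw [← haf, ← haf, h])
  · intro p q h
    have h1 := hb p
    have h2 := hb q
    rw [← h] at h2
    exact hf.injective (by rw [← haf, ← haf]; omega)
  · intro p q h
    have := hα.1 h
    have h1 := ha p
    have h2 := ha q
    omega
  · intro p q h
    have h1 := ha p
    have h2 := ha q
    have h3 := hb q
    rw [← h] at h3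
    omega
  · intro p q h
    have h1 := hα.1 h
    have h2 := hb q
    have h3 : f q ≤ f p := by rw [← haf, ← haf]; omega
    exact hf.le_iff_ge.mp h3

/-- Decreasing values at most `k / 2` on a free parameter set extend to a basic `k`-cover. -/
theorem IsFreeParameterPair.exists_isBasicCover {n r k : ℕ} {G : SimpleGraph (Fin n)}
    {a b : Fin r → Fin n} (hab : IsFreeParameterPair G a b) {v : Fin r → ℕ} (hv : Antitone v)
    (hvk : ∀ i, 2 * v i ≤ k) : ∃ β, IsBasicCover G k β ∧ ∀ i, β (a i) = v i := by
  obtain ⟨ha, hb, haa, hne, hadj, hle⟩ := hab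
  let γ : Fin n → ℕ := Function.extend a v (Function.extend b (fun i ↦ k - v i) fun _ ↦ k)
  have hγa : ∀ i, γ (a i) = v i := fun i ↦ ha.extend_apply _ _ i
  have hγb : ∀ i, γ (b i) = k - v i := by
    intro i
    simp only [γ]
    rw [Function.extend_apply' _ _ _ (by rintro ⟨j, hj⟩; exact hne j i hj), hb.extend_apply]
  have hcases : ∀ x, (∃ i, x = a i) ∨ (∃ i, x = b i) ∨ γ x = k := by
    intro x
    by_cases hxa : ∃ i, a i = x
    · obtain ⟨i, rfl⟩ := hxa
      exact .inl ⟨i, rfl⟩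
    · by_cases hxb : ∃ i, b i = x
      · obtain ⟨i, rfl⟩ := hxb
        exact .inr (.inl ⟨i, rfl⟩)
      · refine .inr (.inr ?_)
        simp only [γ]
        rw [Function.extend_apply' _ _ _ hxa, Function.extend_apply' _ _ _ hxb]
  have hγ : IsCover G k γ := by
    intro x y hxy
    rcases hcases x with ⟨i, rfl⟩ | ⟨i, rfl⟩ | hx
    · rcases hcases y with ⟨j, rfl⟩ | ⟨j, rfl⟩ | hy
      · exact absurd hxy (haa i j)
      · have h1 := hv (hle i j hxy)
        have h2 := hvk j
        rw [hγa, hγb]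
        omega
      · omega
    · rcases hcases y with ⟨j, rfl⟩ | ⟨j, rfl⟩ | hy
      · have h1 := hv (hle j i hxy.symm)
        have h2 := hvk i
        rw [hγa, hγb]
        omega
      · have h1 := hvk i
        have h2 := hvk j
        rw [hγb, hγb]
        omega
      · omega
    · omega
  obtain ⟨β, hβ, hβb⟩ := hγ.exists_isBasicCover_le
  refine ⟨β, hβb, fun i ↦ ?_⟩
  have h1 : β (a i) ≤ γ (a i) := hβ (a i)
  have h2 : β (b i) ≤ γ (b i) := hβ (b i)
  have h3 := hβb.1 (hadj i)
  have h4 := hvk i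
  rw [hγa] at h1
  rw [hγb] at h2
  omega

theorem HasFreeParameterSet.le_card {n r : ℕ} {G : SimpleGraph (Fin n)}
    (h : HasFreeParameterSet G r) : r ≤ n := by
  obtain ⟨a, b, ha, -⟩ := h
  simpa using Fintype.card_le_of_injective a ha

theorem bddAbove_hasFreeParameterSet {n : ℕ} (G : SimpleGraph (Fin n)) :
    BddAbove {r : ℕ | HasFreeParameterSet G r} := ⟨n, fun _ h ↦ h.le_card⟩

theorem hasFreeParameterSet_sSup {n : ℕ} (G : SimpleGraph (Fin n)) :
    HasFreeParameterSet G (sSup {r : ℕ | HasFreeParameterSet G r}) :=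
  Nat.sSup_mem (s := {r : ℕ | HasFreeParameterSet G r})
    ⟨0, Fin.elim0, Fin.elim0, fun i ↦ i.elim0, fun i ↦ i.elim0, fun i ↦ i.elim0,
      fun i ↦ i.elim0, fun i ↦ i.elim0, fun i ↦ i.elim0⟩ (bddAbove_hasFreeParameterSet G)

section FiberCone

variable (K : Type*) [Field K] {n : ℕ} (G : SimpleGraph (Fin n))

theorem coverMonomial_mul (α β : Fin n → ℕ) (k l : ℕ) :
    coverMonomial K α k * coverMonomial K β l = coverMonomial K (α + β) (k + l) := by
  rw [coverMonomial, coverMonomial, coverMonomial, monomial_mul, mul_one]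
  congr 2
  ext o
  cases o <;> simp

theorem coverMonomial_zero : coverMonomial K (0 : Fin n → ℕ) 0 = 1 := by
  rw [coverMonomial, ← C_1, C_apply]
  congr 2
  ext o
  cases o <;> simp

theorem coverMonomial_single (i : Fin n) :
    coverMonomial K (Pi.single i 1) 0 = X (some i) := by
  classical
  rw [coverMonomial, X]
  congr 2
  ext o
  cases o with
  | none => simp
  | some j => simp [Pi.single_apply, Finsupp.single_apply, eq_comm]

variable {K G} in
theorem coverMonomial_mem {α : Fin n → ℕ} {k : ℕ} (h : IsCover G k α) :
    coverMonomial K α k ∈ symbolicRees K G :=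
  Algebra.subset_adjoin ⟨k, α, h, rfl⟩

variable {K G} in
theorem isCover_of_coeff_ne_zero {p : St K n} (hp : p ∈ symbolicRees K G)
    {m : Option (Fin n) →₀ ℕ} (hm : coeff m p ≠ 0) :
    IsCover G (m none) (fun i ↦ m (some i)) := by
  classical
  induction hp using Algebra.adjoin_induction generalizing m with
  | mem p hp =>
    obtain ⟨k, α, hα, rfl⟩ := hp
    rw [coverMonomial, coeff_monomial] at hm
    split_ifs at hm with h
    · subst h
      exact hα
    · exact absurd rfl hm
  | algebraMap r =>
    rw [algebraMap_eq, coeff_C] at hm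
    split_ifs at hm with h
    · subst h
      intro i j _
      simp
    · exact absurd rfl hm
  | add p q _ _ hp hq =>
    rw [coeff_add] at hm
    by_cases h : coeff m p = 0
    · exact hq (by simpa [h] using hm)
    · exact hp h
  | mul p q _ _ hp hq =>
    rw [coeff_mul] at hm
    obtain ⟨⟨u, v⟩, huv, hne⟩ := Finset.exists_ne_zero_of_sum_ne_zero hm
    obtain rfl : u + v = m := Finset.HasAntidiagonal.mem_antidiagonal.mp huv
    exact (hp (left_ne_zero_of_mul hne)).add (hq (right_ne_zero_of_mul hne))

variable {K G} in
/-- Elements of `m A(G)` have no basic covers in their support. -/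
theorem coeff_eq_zero_of_mem_irrelevantIdeal {p : symbolicRees K G}
    (hp : p ∈ irrelevantIdeal K G) {α : Fin n → ℕ} {k : ℕ} (hα : IsBasicCover G k α) :
    coeff (Finsupp.equivFunOnFinite.symm (fun o : Option (Fin n) => o.elim k α)) (p : St K n)
      = 0 := by
  classical
  set m := Finsupp.equivFunOnFinite.symm (fun o : Option (Fin n) => o.elim k α) with hm
  suffices h : ∀ q : symbolicRees K G, coeff m ((q * p : symbolicRees K G) : St K n) = 0 by
    simpa using h 1
  rw [irrelevantIdeal] at hp
  induction hp using Submodule.span_induction with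
  | mem p hp =>
    obtain ⟨i, hi⟩ := hp
    intro q
    rw [Subalgebra.coe_mul, hi, coeff_mul_X']
    split_ifs with hmem
    · by_contra hne
      refine hα.not_isCover_of_add_single
        (β := fun j ↦ (m - Finsupp.single (some i) 1 : Option (Fin n) →₀ ℕ) (some j)) i ?_ ?_
      · funext j
        by_cases hj : j = i
        · subst hj
          have : α j ≠ 0 := by simpa [hm] using hmem
          simp [hm]
          omega
        · simp [hm, hj, Finsupp.single_apply, Ne.symm hj]
      · simpa [hm, Finsupp.single_apply] using isCover_of_coeff_ne_zero q.2 hne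
    · rfl
  | zero => simp
  | add p q _ _ hp hq =>
    intro r
    rw [mul_add, Subalgebra.coe_add, coeff_add, hp, hq, add_zero]
  | smul a p _ hp =>
    intro q
    rw [smul_eq_mul, ← mul_assoc]
    exact hp _

noncomputable instance : Algebra K (symbolicFiberCone K G) :=
  inferInstanceAs (Algebra K (symbolicRees K G ⧸ irrelevantIdeal K G))

/-- The projection from the symbolic Rees algebra to the symbolic fiber cone. -/
noncomputable def fiberMk : symbolicRees K G →ₐ[K] symbolicFiberCone K G :=
  Ideal.Quotient.mkₐ K (irrelevantIdeal K G)

theorem fiberMk_surjective : Function.Surjective (fiberMk K G) :=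
  Ideal.Quotient.mk_surjective

variable {K G} in
theorem fiberMk_eq_zero_iff {p : symbolicRees K G} :
    fiberMk K G p = 0 ↔ p ∈ irrelevantIdeal K G :=
  Ideal.Quotient.eq_zero_iff_mem

attribute [local irreducible] instCommRingSymbolicFiberCone

open Classical in
/-- The class of `x^α t^k` in the fiber cone, extended by zero to all exponents. -/
noncomputable def fiberMonomial (α : Fin n → ℕ) (k : ℕ) : symbolicFiberCone K G :=
  if h : IsCover G k α then fiberMk K G ⟨coverMonomial K α k, coverMonomial_mem h⟩ else 0

variable {G}

theorem fiberMonomial_of_isCover {α : Fin n → ℕ} {k : ℕ} (h : IsCover G k α) :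
    fiberMonomial K G α k =
      fiberMk K G ⟨coverMonomial K α k, coverMonomial_mem h⟩ := dif_pos h

theorem fiberMonomial_mul {α β : Fin n → ℕ} {k l : ℕ} (hα : IsCover G k α) (hβ : IsCover G l β) :
    fiberMonomial K G α k * fiberMonomial K G β l = fiberMonomial K G (α + β) (k + l) := by
  rw [fiberMonomial_of_isCover K hα, fiberMonomial_of_isCover K hβ,
    fiberMonomial_of_isCover K (hα.add hβ), ← map_mul]
  congr 1
  exact Subtype.ext (coverMonomial_mul K α β k l)

variable (G) in
theorem isCover_zero (α : Fin n → ℕ) : IsCover G 0 α := fun _ _ _ ↦ Nat.zero_le _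

variable (G) in
theorem fiberMonomial_zero : fiberMonomial K G 0 0 = 1 := by
  rw [fiberMonomial_of_isCover K (isCover_zero G 0), ← map_one (fiberMk K G)]
  congr 1
  exact Subtype.ext (coverMonomial_zero K)

theorem fiberMonomial_eq_zero {α : Fin n → ℕ} {k : ℕ} (h : ¬ IsBasicCover G k α) :
    fiberMonomial K G α k = 0 := by
  by_cases hα : IsCover G k α
  · obtain ⟨i, β, hβ, rfl⟩ := hα.exists_sub_single h
    have : fiberMonomial K G (Pi.single i 1) 0 = 0 := by
      rw [fiberMonomial_of_isCover K (isCover_zero G _), fiberMk_eq_zero_iff]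
      exact Ideal.subset_span ⟨i, coverMonomial_single K i⟩
    rw [← add_zero k, ← fiberMonomial_mul K hβ (isCover_zero G _), this, mul_zero]
  · exact dif_neg hα

theorem linearIndependent_fiberMonomial {ι : Type*} {α : ι → Fin n → ℕ} {k : ι → ℕ}
    (hb : ∀ i, IsBasicCover G (k i) (α i)) (hinj : Function.Injective fun i ↦ (α i, k i)) :
    LinearIndependent K fun i ↦ fiberMonomial K G (α i) (k i) := by
  classical
  rw [linearIndependent_iff']
  intro s c hc j hj
  let x : symbolicRees K G :=
    ∑ i ∈ s, c i • ⟨coverMonomial K (α i) (k i), coverMonomial_mem (hb i).1⟩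
  have hx : x ∈ irrelevantIdeal K G := by
    rw [← fiberMk_eq_zero_iff, ← hc]
    simp only [x]
    rw [map_sum]
    refine Finset.sum_congr rfl fun i _ ↦ ?_
    rw [fiberMonomial_of_isCover K (hb i).1, map_smul]
  have h0 := coeff_eq_zero_of_mem_irrelevantIdeal hx (hb j)
  have hxc : (x : St K n) = ∑ i ∈ s, c i • coverMonomial K (α i) (k i) := by
    simp [x]
  rw [hxc, coeff_sum, Finset.sum_eq_single j] at h0
  · simpa [coverMonomial] using h0
  · intro i _ hij
    rw [coeff_smul, coverMonomial, coeff_monomial, if_neg, smul_zero]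
    intro h
    have h' := Finsupp.equivFunOnFinite.symm.injective h
    refine hij (hinj (Prod.ext (funext fun l ↦ ?_) ?_))
    · exact congrFun h' (some l)
    · exact congrFun h' none
  · exact fun h ↦ absurd hj h

variable (G)

/-- The classes of the `k`-covers with `k ≤ N` span the part of degree at most `N`. -/
noncomputable def fiberFiltration (N : ℕ) :
    Submodule K (symbolicFiberCone K G) :=
  Submodule.span K {x | ∃ k ≤ N, ∃ α, IsCover G k α ∧ x = fiberMonomial K G α k}

variable {G} in
theorem fiberMonomial_mem_fiberFiltration {α : Fin n → ℕ} {k N : ℕ} (h : IsCover G k α)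
    (hk : k ≤ N) : fiberMonomial K G α k ∈ fiberFiltration K G N :=
  Submodule.subset_span ⟨k, hk, α, h, rfl⟩

theorem fiberFiltration_mono : Monotone (fiberFiltration K G) := fun _ _ hMN ↦
  Submodule.span_mono fun _ ⟨k, hk, h⟩ ↦ ⟨k, hk.trans hMN, h⟩

theorem one_mem_fiberFiltration : 1 ∈ fiberFiltration K G 0 := by
  rw [← fiberMonomial_zero K G]
  exact fiberMonomial_mem_fiberFiltration K (isCover_zero G 0) le_rfl

theorem mul_mem_fiberFiltration (M N : ℕ) (x y : symbolicFiberCone K G)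
    (hx : x ∈ fiberFiltration K G M) (hy : y ∈ fiberFiltration K G N) :
    x * y ∈ fiberFiltration K G (M + N) := by
  have h := Submodule.mul_mem_mul hx hy
  rw [fiberFiltration, fiberFiltration, Submodule.span_mul_span] at h
  refine Submodule.span_le.mpr ?_ h
  rintro _ ⟨_, ⟨k, hk, α, hα, rfl⟩, _, ⟨l, hl, β, hβ, rfl⟩, rfl⟩
  simp only [fiberMonomial_mul K hα hβ]
  exact fiberMonomial_mem_fiberFiltration K (hα.add hβ) (by omega)

theorem exists_mem_fiberFiltration (x : symbolicFiberCone K G) :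
    ∃ N, x ∈ fiberFiltration K G N := by
  obtain ⟨⟨p, hp⟩, rfl⟩ := fiberMk_surjective K G x
  induction hp using Algebra.adjoin_induction with
  | mem p hp =>
    obtain ⟨k, α, hα, rfl⟩ := hp
    exact ⟨k, by
      simpa [fiberMonomial_of_isCover K hα] using fiberMonomial_mem_fiberFiltration K hα le_rfl⟩
  | algebraMap r =>
    refine ⟨0, ?_⟩
    have := Submodule.smul_mem _ r (one_mem_fiberFiltration K G)
    rw [← Algebra.algebraMap_eq_smul_one, ← (fiberMk K G).commutes] at this
    exact this
  | add p q hp hq ihp ihq =>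
    obtain ⟨M, hM⟩ := ihp
    obtain ⟨N, hN⟩ := ihq
    refine ⟨M + N, ?_⟩
    have := add_mem (fiberFiltration_mono K G (Nat.le_add_right M N) hM)
      (fiberFiltration_mono K G (Nat.le_add_left N M) hN)
    rwa [← map_add] at this
  | mul p q hp hq ihp ihq =>
    obtain ⟨M, hM⟩ := ihp
    obtain ⟨N, hN⟩ := ihq
    refine ⟨M + N, ?_⟩
    have := mul_mem_fiberFiltration K G _ _ _ _ hM hN
    rwa [← map_mul] at this

theorem fiberFiltration_le_pow (M : ℕ) (hM : 1 ≤ M) :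
    fiberFiltration K G (2 * M) ≤ fiberFiltration K G 2 ^ M := by
  induction M, hM using Nat.le_induction with
  | base => simp
  | succ M hM ih =>
    rw [pow_succ]
    refine le_trans ?_ (mul_le_mul_left ih _)
    refine Submodule.span_le.mpr ?_
    rintro _ ⟨k, hk, α, hα, rfl⟩
    obtain hk2 | ⟨l, rfl⟩ : k ≤ 2 * M ∨ ∃ l, k = l + 2 := by
      by_cases h : k ≤ 2 * M
      · exact .inl h
      · exact .inr ⟨k - 2, by omega⟩
    · rw [← mul_one (fiberMonomial K G α k)]
      exact Submodule.mul_mem_mul (fiberMonomial_mem_fiberFiltration K hα hk2)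
        (fiberFiltration_mono K G (Nat.zero_le 2) (one_mem_fiberFiltration K G))
    · obtain ⟨β, γ, hβ, hγ, rfl⟩ := hα.exists_add
      rw [← fiberMonomial_mul K hβ hγ]
      exact Submodule.mul_mem_mul (fiberMonomial_mem_fiberFiltration K hβ (by omega))
        (fiberMonomial_mem_fiberFiltration K hγ le_rfl)

variable {G}

theorem exists_finset_fiberFiltration_le_span (hiso : ∀ v : Fin n, ∃ w, G.Adj v w) {g : ℕ}
    (hg : ∀ r, HasFreeParameterSet G r → r ≤ g) (N : ℕ) :
    ∃ s : Finset (symbolicFiberCone K G),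
      s.card ≤ (g + (g + 1)) ^ n * (N + 1) ^ (g + 1) ∧
      fiberFiltration K G N ≤ Submodule.span K (s : Set _) := by
  classical
  let decode : Fin (N + 1) × (Fin g → Fin (N + 1)) × (Fin n → Fin g ⊕ Fin g ⊕ Unit) →
      symbolicFiberCone K G := fun c ↦
    fiberMonomial K G (fun i ↦ Sum.elim (fun p ↦ (c.2.1 p : ℕ))
      (Sum.elim (fun p ↦ c.1 - c.2.1 p) fun _ ↦ c.1 / 2) (c.2.2 i)) c.1
  refine ⟨Finset.univ.image decode, Finset.card_image_le.trans (le_of_eq ?_), ?_⟩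
  · simp
    ring
  refine Submodule.span_le.mpr ?_
  rintro _ ⟨k, hk, α, -, rfl⟩
  by_cases hα : IsBasicCover G k α
  swap
  · rw [fiberMonomial_eq_zero K hα]
    exact zero_mem _
  have hcard := hg _ (hα.hasFreeParameterSet hiso)
  set W := (Finset.univ.filter fun i ↦ 2 * α i < k).image α
  have hmem : ∀ i, 2 * α i < k → α i ∈ W := fun i hi ↦
    Finset.mem_image_of_mem α (by simpa using hi)
  have hWk : ∀ w ∈ W, w < N + 1 := by
    intro w hw
    obtain ⟨i, hi, rfl⟩ := Finset.mem_image.mp hw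
    have := (Finset.mem_filter.mp hi).2
    omega
  let v : Fin g → Fin (N + 1) := fun p ↦
    if hp : (p : ℕ) < W.card then ⟨W.orderEmbOfFin rfl ⟨p, hp⟩, hWk _ (W.orderEmbOfFin_mem rfl _)⟩
    else 0
  have hv : ∀ w ∈ W, ∃ p, (v p : ℕ) = w := by
    intro w hw
    rw [← Finset.mem_coe, ← W.range_orderEmbOfFin rfl] at hw
    obtain ⟨q, rfl⟩ := hw
    refine ⟨⟨q, q.2.trans_le hcard⟩, ?_⟩
    simp [v]
  have hτ : ∀ i, ∃ t : Fin g ⊕ Fin g ⊕ Unit, Sum.elim (fun p ↦ (v p : ℕ))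
      (Sum.elim (fun p ↦ k - v p) fun _ ↦ k / 2) t = α i := by
    intro i
    rcases lt_trichotomy (2 * α i) k with h | h | h
    · obtain ⟨p, hp⟩ := hv _ (hmem i h)
      exact ⟨.inl p, hp⟩
    · exact ⟨.inr (.inr ()), by simp only [Sum.elim_inr]; omega⟩
    · obtain ⟨j, -, hj⟩ := hα.exists_adj_add_eq hiso i
      obtain ⟨p, hp⟩ := hv _ (hmem j (by omega))
      exact ⟨.inr (.inl p), by simp only [Sum.elim_inr, Sum.elim_inl]; omega⟩
  choose τ hτ using hτ
  refine Submodule.subset_span ?_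
  simp only [Finset.coe_image, Finset.coe_univ, Set.image_univ]
  refine ⟨(⟨k, Nat.lt_succ_of_le hk⟩, v, τ), ?_⟩
  simp only [decode, hτ]

theorem exists_linearIndependent_mem_fiberFiltration {r : ℕ} (hr : HasFreeParameterSet G r)
    (m : ℕ) (hm : 1 ≤ m) :
    ∃ v : (Fin (r + 1) → Fin m) → symbolicFiberCone K G,
      LinearIndependent K v ∧ ∀ t, v t ∈ fiberFiltration K G (2 * ((r + 1) * m)) := by
  obtain ⟨a, b, hab⟩ := hr
  let k : (Fin (r + 1) → Fin m) → ℕ := fun t ↦ 2 * (r * m) + t 0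
  let u : (Fin (r + 1) → Fin m) → Fin r → ℕ := fun t i ↦ (i.rev : ℕ) * m + t i.succ
  have hex : ∀ t, ∃ β, IsBasicCover G (k t) β ∧ ∀ i, β (a i) = u t i := by
    intro t
    refine hab.exists_isBasicCover ?_ ?_
    · intro i j hij
      rcases hij.eq_or_lt with rfl | hij
      · exact le_rfl
      · have h1 : (j.rev : ℕ) + 1 ≤ i.rev := Fin.rev_lt_rev.mpr hij
        have h2 := (t j.succ).2
        have h3 := Nat.mul_le_mul_right m h1
        simp only [u]
        rw [add_mul] at h3
        omega
    · intro i
      have h1 : (i.rev : ℕ) + 1 ≤ r := i.rev.2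
      have h2 := (t i.succ).2
      have h3 := Nat.mul_le_mul_right m h1
      simp only [u, k]
      rw [add_mul] at h3
      omega
  choose β hβ hβa using hex
  refine ⟨fun t ↦ fiberMonomial K G (β t) (k t), linearIndependent_fiberMonomial K hβ ?_,
    fun t ↦ fiberMonomial_mem_fiberFiltration K (hβ t).1 ?_⟩
  · intro t t' h
    simp only [Prod.mk.injEq] at h
    funext i
    refine Fin.cases ?_ (fun i ↦ ?_) i
    · exact Fin.ext (Nat.add_left_cancel h.2)
    · have h1 := hβa t i
      rw [h.1, hβa t' i] at h1
      exact Fin.ext (Nat.add_left_cancel h1).symm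
  · have := (t 0).2
    simp only [k]
    rw [add_mul]
    omega

theorem fg_fiberFiltration (hiso : ∀ v : Fin n, ∃ w, G.Adj v w) (N : ℕ) :
    (fiberFiltration K G N).FG := by
  obtain ⟨s, -, hs⟩ := exists_finset_fiberFiltration_le_span K hiso
    (fun _ hr ↦ hr.le_card) N
  have := Submodule.finiteDimensional_of_le hs
  exact (Submodule.fg_iff_finiteDimensional _).mpr this

theorem finiteType_symbolicFiberCone (hiso : ∀ v : Fin n, ∃ w, G.Adj v w) :
    Algebra.FiniteType K (symbolicFiberCone K G) := by
  obtain ⟨s, hs⟩ := fg_fiberFiltration K hiso 2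
  refine ⟨⟨s, eq_top_iff.mpr fun x _ ↦ ?_⟩⟩
  obtain ⟨N, hN⟩ := exists_mem_fiberFiltration K G x
  have hx := fiberFiltration_le_pow K G (N + 1) (by omega)
    (fiberFiltration_mono K G (by omega) hN)
  have hle : fiberFiltration K G 2 ≤
      Subalgebra.toSubmodule (Algebra.adjoin K (s : Set (symbolicFiberCone K G))) := by
    rw [← hs]
    exact Submodule.span_le.mpr Algebra.subset_adjoin
  rw [← Subalgebra.mem_toSubmodule]
  have hpow : ∀ M, fiberFiltration K G 2 ^ M ≤
      Subalgebra.toSubmodule (Algebra.adjoin K (s : Set (symbolicFiberCone K G))) := by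
    intro M
    induction M with
    | zero =>
      rw [pow_zero, Submodule.one_le]
      exact one_mem (Algebra.adjoin K (s : Set (symbolicFiberCone K G)))
    | succ M ih =>
      rw [pow_succ, Submodule.mul_le]
      exact fun y hy z hz ↦ mul_mem (S := Subalgebra K _) (ih hy) (hle hz)
  exact hpow _ hx

end FiberCone

/-- For a connected graph `G` and a field `K`, the Krull dimension of the
symbolic fiber cone `Ā(G)` of the cover ideal `J(G)` equals the graphical dimension of `G`. -/
theorem krullDim_symbolicFiberCone (K : Type*) [Field K] {n : ℕ}
    (G : SimpleGraph (Fin n)) (hconn : G.Connected)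
    (hiso : ∀ v : Fin n, ∃ w, G.Adj v w) :
    ringKrullDim (symbolicFiberCone K G) = (gdim G : WithBot (WithTop ℕ)) := by
  have hgrowth := exists_finset_fiberFiltration_le_span K hiso
    (g := sSup {r : ℕ | HasFreeParameterSet G r})
    (fun r hr ↦ le_csSup (bddAbove_hasFreeParameterSet G) hr)
  have hlower := exists_linearIndependent_mem_fiberFiltration K (hasFreeParameterSet_sSup G)
  have hV := fg_fiberFiltration K hiso 2
  have : Nontrivial (symbolicFiberCone K G) := by
    obtain ⟨v, hv, -⟩ := hlower 1 le_rfl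
    exact ⟨_, _, hv.ne_zero fun _ ↦ 0⟩
  have := finiteType_symbolicFiberCone K hiso
  obtain ⟨d, φ, hinj, hfin⟩ :=
    exists_finite_inj_algHom_of_fg K (symbolicFiberCone K G)
  have hd : d = gdim G := by
    refine le_antisymm ?_ ?_
    · exact le_of_injective_of_growth_le φ hinj (fiberFiltration K G) (fiberFiltration_mono K G)
        (one_mem_fiberFiltration K G) (mul_mem_fiberFiltration K G)
        (exists_mem_fiberFiltration K G) hgrowth
    · refine le_of_finite_of_growth_ge (c := sSup {r : ℕ | HasFreeParameterSet G r} + 1)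
        φ hfin _ hV fun m hm ↦ ?_
      obtain ⟨v, hv, hmem⟩ := hlower m hm
      exact ⟨v, hv, fun t ↦ fiberFiltration_le_pow K G _ (Nat.mul_pos (by omega) hm) (hmem t)⟩
  rw [ringKrullDim_eq_of_injective_of_isIntegral (φ : MvPolynomial (Fin d) K →+* _) hinj
    hfin.to_isIntegral, MvPolynomial.ringKrullDim_of_isNoetherianRing,
    ringKrullDim_eq_zero_of_field, zero_add, Nat.card_fin, hd]
  rfl
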